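/- Let H be a 3-uniform hypergraph with no linear cycle and let T be a skeleton (respectively, a near-skeleton with exceptional vertex w) of H. Suppose T' is a linear tree obtained from T by a sequence of swaps with edges of H induced on V(T), where a swap replaces the unique edge of T containing a pair {a,b} by an edge f = {v,a,b} ∈ E(H) with v ∈ V(T), {a,b} ⊆ V(T), and neither a nor b in any edge of the current tree containing v. Then T' is a skeleton (respectively, a near-skeleton with exceptional vertex w) of H with V(T') = V(T). -/

import Mathlib

/-!
Let a swap replace `e₀ = {a, b, c}` by `f = {v, a, b}`. Deleting `e₀` from the linear tree `T`
leaves three vertex-disjoint (possibly trivial) subtrees hanging at `a`, `b` and `c`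
(`IsLinearTree.decomp`), and `v ∉ e₀` lies in one of them. If `v` were in the subtree at `a`, a
path from `v` to `a` inside that subtree (`Rooted.exists_path`) would have at least two edges, as
no edge of `T` contains both `v` and `a`; closed up by `f` it would be a linear cycle
(`Rooted.hasLinearCycle`). The same holds for `b`. So `v` lies in the subtree at `c`. Adding `f` to
this subtree at `v` and gluing the other two subtrees at `a` and `b` (`Rooted.glue`) shows that the
new edge set is a linear tree with the same vertices (`IsSwap.linearTree`). Being a skeleton or a
near-skeleton depends only on the tree being linear and on its vertex set, so induction on the
number of swaps finishes the proof.
-/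

open Finset

variable {V : Type*} [Fintype V] [DecidableEq V]

/-- A linear cycle: a cyclic sequence of `k ≥ 3` distinct edges in which cyclically
consecutive edges intersect in exactly one vertex and non-consecutive edges are disjoint. -/
def HasLinearCycle (H : Finset (Finset V)) : Prop :=
  ∃ k : ℕ, 3 ≤ k ∧ ∃ e : ZMod k → Finset V,
    Function.Injective e ∧ (∀ i, e i ∈ H) ∧
    (∀ i, (e i ∩ e (i + 1)).card = 1) ∧
    (∀ i j, i ≠ j → i + 1 ≠ j → j + 1 ≠ i → e i ∩ e j = ∅)

/-- The vertex set of a set of edges. -/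
def verts (T : Finset (Finset V)) : Finset V := T.sup id

/-- A linear subtree of `H`: obtained from a single edge of `H` by repeatedly adding an
edge of `H` that intersects the set of vertices used so far in exactly one vertex. -/
inductive IsLinearTree (H : Finset (Finset V)) : Finset (Finset V) → Prop
  | single (e : Finset V) (he : e ∈ H) : IsLinearTree H {e}
  | extend (T : Finset (Finset V)) (e : Finset V) (hT : IsLinearTree H T)
      (he : e ∈ H) (hcap : (e ∩ verts T).card = 1) : IsLinearTree H (insert e T)


/-- A skeleton of `H`: a (non-trivial) linear subtree such that no edge of `H` meets its
vertex set in exactly one vertex. -/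
def IsSkeleton (H T : Finset (Finset V)) : Prop :=
  IsLinearTree H T ∧ ∀ e ∈ H, (e ∩ verts T).card ≠ 1

/-- A near-skeleton of `H` with exceptional vertex `w`: a (non-trivial) linear subtree
such that every edge of `H` meeting its vertex set in exactly one vertex meets it
in `{w}`. -/
def IsNearSkeleton (H T : Finset (Finset V)) (w : V) : Prop :=
  IsLinearTree H T ∧ w ∈ verts T ∧
    ∀ e ∈ H, (e ∩ verts T).card = 1 → e ∩ verts T = {w}

/-- A single swap: replace the unique edge of `T` containing the pair `{a,b}` by an edge
`f = {v,a,b}` of `H` induced on `V(T)`, where neither `a` nor `b` lies in an edge of `T`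
containing `v`. -/
def IsSwap (H : Finset (Finset V)) (T T' : Finset (Finset V)) : Prop :=
  ∃ (v a b : V) (e₀ : Finset V),
    v ∈ verts T ∧ a ∈ verts T ∧ b ∈ verts T ∧
    a ≠ b ∧ v ≠ a ∧ v ≠ b ∧
    ({v, a, b} : Finset V) ∈ H ∧
    (∀ e ∈ T, v ∈ e → a ∉ e ∧ b ∉ e) ∧
    e₀ ∈ T ∧ a ∈ e₀ ∧ b ∈ e₀ ∧ (∀ e ∈ T, a ∈ e → b ∈ e → e = e₀) ∧
    T' = insert ({v, a, b} : Finset V) (T.erase e₀)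

/-! ### Rooted linear trees -/

set_option linter.unusedSectionVars false

/-- `Rooted H x S`: the edges of `S` form a linear tree of `H` grown from the single vertex `x`;
the trivial tree is encoded by `S = ∅`. -/
inductive Rooted (H : Finset (Finset V)) (x : V) : Finset (Finset V) → Prop
  | nil : Rooted H x ∅
  | extend (S : Finset (Finset V)) (e : Finset V) (hS : Rooted H x S) (he : e ∈ H)
      (hcap : (e ∩ insert x (verts S)).card = 1) : Rooted H x (insert e S)

lemma mem_verts {T : Finset (Finset V)} {x : V} : x ∈ verts T ↔ ∃ e ∈ T, x ∈ e := by
  simp [verts, Finset.mem_sup]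

lemma verts_insert (e : Finset V) (T : Finset (Finset V)) :
    verts (insert e T) = e ∪ verts T := by
  simp [verts]

lemma verts_union (S T : Finset (Finset V)) : verts (S ∪ T) = verts S ∪ verts T := by
  simp [verts, Finset.sup_union]

lemma verts_empty : verts (∅ : Finset (Finset V)) = ∅ := by
  simp [verts]

lemma IsLinearTree.subset {H T : Finset (Finset V)} (h : IsLinearTree H T) : T ⊆ H := by
  induction h with
  | single e he => simpa using he
  | extend T e hT he hcap ih => exact Finset.insert_subset he ih

lemma Rooted.subset {H S : Finset (Finset V)} {x : V} (h : Rooted H x S) : S ⊆ H := by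
  induction h with
  | nil => simp
  | extend S e hS he hcap ih => exact Finset.insert_subset he ih

lemma Rooted.eq_empty_or {H S : Finset (Finset V)} {x : V} (h : Rooted H x S) :
    S = ∅ ∨ (IsLinearTree H S ∧ x ∈ verts S) := by
  induction h with
  | nil => exact Or.inl rfl
  | extend S e hS he hcap ih =>
    right
    rcases ih with rfl | ⟨hl, hx⟩
    · refine ⟨by simpa using IsLinearTree.single e he, ?_⟩
      rw [verts_empty, Finset.card_eq_one] at hcap
      obtain ⟨y, hy⟩ := hcap
      have : y ∈ e ∩ insert x ∅ := by rw [hy]; simp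
      rw [verts_insert]
      simp at this
      grind
    · rw [Finset.insert_eq_self.2 hx] at hcap
      exact ⟨IsLinearTree.extend S e hl he hcap, by rw [verts_insert]; simp [hx]⟩

/-- Two rooted trees sharing exactly one vertex, the root of the second, unite to a rooted tree. -/
lemma Rooted.glue {H U S : Finset (Finset V)} {r x : V} (hU : Rooted H r U)
    (hx : x ∈ insert r (verts U)) (h : Rooted H x S)
    (hd : ∀ y ∈ verts S, y ∈ insert r (verts U) → y = x) : Rooted H r (U ∪ S) := by
  induction h with
  | nil => simpa using hU
  | extend S e hS he hcap ih =>
    rw [verts_insert] at hd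
    rw [Finset.union_insert]
    refine Rooted.extend _ _ (ih fun y hy => hd y (Finset.mem_union_right _ hy)) he ?_
    rw [← hcap, verts_union]
    congr 1
    ext y
    have := hd y
    grind

/-- A linear tree can be grown from any of its vertices. -/
lemma IsLinearTree.rooted {H T : Finset (Finset V)} (h : IsLinearTree H T) :
    ∀ x ∈ verts T, Rooted H x T := by
  have hsingle : ∀ e ∈ H, ∀ x ∈ e, Rooted H x {e} := by
    intro e he x hx
    refine Rooted.extend ∅ e Rooted.nil he (Finset.card_eq_one.2 ⟨x, ?_⟩)
    ext z
    simp only [verts_empty, Finset.mem_inter, Finset.mem_insert, Finset.notMem_empty, or_false,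
      Finset.mem_singleton]
    grind
  induction h with
  | single e he =>
    intro x hx
    exact hsingle e he x (by simpa [verts] using hx)
  | extend T e hT he hcap ih =>
    intro x hx
    by_cases hxT : x ∈ verts T
    · exact Rooted.extend _ _ (ih x hxT) he (by rwa [Finset.insert_eq_self.2 hxT])
    · have hxe : x ∈ e := by
        rw [verts_insert, Finset.mem_union] at hx
        exact hx.resolve_right hxT
      obtain ⟨y, hy⟩ := Finset.card_eq_one.1 hcap
      have hye : ∀ z, z ∈ e ∧ z ∈ verts T ↔ z = y := by
        intro z
        rw [← Finset.mem_inter, hy, Finset.mem_singleton]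
      have hyy := (hye y).2 rfl
      have hv : verts ({e} : Finset (Finset V)) = e := by simp [verts]
      refine Rooted.glue (hsingle e he x hxe) ?_ (ih y hyy.2) ?_
      · rw [hv]; exact Finset.mem_insert_of_mem hyy.1
      · intro z hz hz'
        rw [hv, Finset.insert_eq_self.2 hxe] at hz'
        exact (hye z).1 ⟨hz', hz⟩

/-! ### Deleting an edge of a linear tree -/

/-- Deleting an edge `e₀` of a linear tree leaves vertex-disjoint rooted trees, one for each
vertex of `e₀`. -/
lemma IsLinearTree.decomp {H T : Finset (Finset V)} (h3 : ∀ e ∈ H, e.card = 3)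
    (h : IsLinearTree H T) (e₀ : Finset V) (he₀ : e₀ ∈ T) :
    ∃ F : V → Finset (Finset V), (∀ x ∈ e₀, Rooted H x (F x)) ∧ T.erase e₀ = e₀.biUnion F ∧
      ∀ x ∈ e₀, ∀ y ∈ e₀, ∀ z, z ∈ insert x (verts (F x)) → z ∈ insert y (verts (F y)) →
        x = y := by
  induction h with
  | single e he =>
    obtain rfl : e₀ = e := by simpa using he₀
    refine ⟨fun _ => ∅, fun x _ => Rooted.nil, by ext; simp, ?_⟩
    simp [verts_empty]
  | extend T e hT he hcap ih =>
    have heT : e ∉ T := by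
      intro heT
      have hs : e ∩ verts T = e :=
        Finset.inter_eq_left.2 fun y hy => mem_verts.2 ⟨e, heT, hy⟩
      rw [hs, h3 e he] at hcap
      omega
    obtain ⟨y, hy⟩ := Finset.card_eq_one.1 hcap
    have hye : ∀ z, z ∈ e ∧ z ∈ verts T ↔ z = y := by
      intro z
      rw [← Finset.mem_inter, hy, Finset.mem_singleton]
    have hyy := (hye y).2 rfl
    by_cases hee : e₀ = e
    · -- The whole of `T` hangs at the vertex `y` of the new edge.
      subst hee
      have hFv : ∀ x, verts (if x = y then T else ∅) = if x = y then verts T else ∅ := by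
        intro x
        split_ifs <;> simp [verts_empty]
      refine ⟨fun x => if x = y then T else ∅, ?_, ?_, ?_⟩
      · intro x _
        by_cases hxy : x = y
        · subst hxy
          simpa using hT.rooted x hyy.2
        · simpa [hxy] using Rooted.nil
      · rw [Finset.erase_insert heT]
        ext g
        simp only [Finset.mem_biUnion]
        constructor
        · intro hg
          exact ⟨y, hyy.1, by simpa using hg⟩
        · rintro ⟨x, _, hg⟩
          by_cases hxy : x = y
          · simpa [hxy] using hg
          · simp [hxy] at hg
      · intro x₁ h₁ x₂ h₂ z hz₁ hz₂
        simp only [hFv, Finset.mem_insert] at hz₁ hz₂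
        have e₁ := hye x₁
        have e₂ := hye x₂
        split_ifs at hz₁ hz₂ <;> grind
    · have he₀T : e₀ ∈ T := by grind
      obtain ⟨F, hF, hE, hD⟩ := ih he₀T
      have hV : ∀ z, z ∈ verts T ↔ ∃ x ∈ e₀, z ∈ insert x (verts (F x)) := by
        intro z
        have hT' : T = insert e₀ (e₀.biUnion F) := by rw [← hE, Finset.insert_erase he₀T]
        have hz : z ∈ verts T ↔ z ∈ e₀ ∨ ∃ e ∈ e₀.biUnion F, z ∈ e := by
          rw [hT', verts_insert, Finset.mem_union, mem_verts]
        rw [hz]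
        simp only [Finset.mem_biUnion, Finset.mem_insert, mem_verts]
        grind
      obtain ⟨x, hx, hyx⟩ := (hV y).1 hyy.2
      refine ⟨Function.update F x (insert e (F x)), ?_, ?_, ?_⟩
      · intro x' hx'
        by_cases hxx : x' = x
        · subst hxx
          rw [Function.update_self]
          refine Rooted.extend _ _ (hF _ hx) he (Finset.card_eq_one.2 ⟨y, ?_⟩)
          ext z
          rw [Finset.mem_inter, Finset.mem_singleton, ← hye z]
          have := hye z
          grind
        · rw [Function.update_of_ne hxx]
          exact hF _ hx'
      · rw [Finset.erase_insert_of_ne (Ne.symm hee), hE]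
        ext g
        simp only [Finset.mem_biUnion, Finset.mem_insert]
        constructor
        · rintro (rfl | ⟨x', hx', hg⟩)
          · exact ⟨x, hx, by simp⟩
          · refine ⟨x', hx', ?_⟩
            by_cases hxx : x' = x
            · subst hxx; simp [hg]
            · rw [Function.update_of_ne hxx]; exact hg
        · rintro ⟨x', hx', hg⟩
          by_cases hxx : x' = x
          · subst hxx
            rw [Function.update_self] at hg
            grind
          · rw [Function.update_of_ne hxx] at hg
            exact Or.inr ⟨x', hx', hg⟩
      · -- A vertex of the new edge in a subtree other than the one at `x` would be `y`.
        have key : ∀ x' ∈ e₀, ∀ z, z ∈ insert x' (verts (Function.update F x (insert e (F x)) x')) →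
            z ∈ insert x' (verts (F x')) ∨ (x' = x ∧ z ∈ e) := by
          intro x' _ z hz
          by_cases hxx : x' = x
          · subst hxx
            rw [Function.update_self, verts_insert] at hz
            grind
          · rw [Function.update_of_ne hxx] at hz
            exact Or.inl hz
        intro x₁ h₁ x₂ h₂ z hz₁ hz₂
        rcases key x₁ h₁ z hz₁ with k₁ | ⟨k₁, k₁'⟩ <;> rcases key x₂ h₂ z hz₂ with k₂ | ⟨k₂, k₂'⟩
        · exact hD x₁ h₁ x₂ h₂ z k₁ k₂
        · have hzy : z = y := (hye z).1 ⟨k₂', (hV z).2 ⟨x₁, h₁, k₁⟩⟩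
          rw [k₂]
          exact hD x₁ h₁ x hx z k₁ (hzy ▸ hyx)
        · have hzy : z = y := (hye z).1 ⟨k₁', (hV z).2 ⟨x₂, h₂, k₂⟩⟩
          rw [k₁]
          exact hD x hx x₂ h₂ z (hzy ▸ hyx) k₂
        · rw [k₁, k₂]

/-! ### Paths and linear cycles -/

/-- In a tree rooted at `a`, every vertex `v ≠ a` is joined to `a` by a linear path
`p 0, …, p k` of edges, in which only the first edge contains `v` and only the last contains `a`. -/
lemma Rooted.exists_path {H S : Finset (Finset V)} {a : V} (h : Rooted H a S) :
    ∀ v ∈ verts S, v ≠ a → ∃ (k : ℕ) (p : ℕ → Finset V), (∀ i ≤ k, p i ∈ S) ∧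
      (∀ i ≤ k, v ∈ p i ↔ i = 0) ∧ (∀ i ≤ k, a ∈ p i ↔ i = k) ∧
      (∀ i < k, (p i ∩ p (i + 1)).card = 1) ∧
      (∀ i j, i + 1 < j → j ≤ k → p i ∩ p j = ∅) := by
  induction h with
  | nil => intro v hv; simp [verts_empty] at hv
  | extend S e hS he hcap ih =>
    intro v hv hva
    by_cases hvS : v ∈ verts S
    · obtain ⟨k, p, h1, h2⟩ := ih v hvS hva
      exact ⟨k, p, fun i hi => Finset.mem_insert_of_mem (h1 i hi), h2⟩
    have hve : v ∈ e := by
      rw [verts_insert, Finset.mem_union] at hv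
      exact hv.resolve_right hvS
    obtain ⟨y, hy⟩ := Finset.card_eq_one.1 hcap
    have hye : ∀ z, z ∈ e ∧ z ∈ insert a (verts S) ↔ z = y := by
      intro z
      rw [← Finset.mem_inter, hy, Finset.mem_singleton]
    have hyy := (hye y).2 rfl
    by_cases hya : y = a
    · subst hya
      refine ⟨0, fun _ => e, ?_, ?_, ?_, ?_, ?_⟩
      · intro i _; simp
      · intro i hi; simp [hve]; omega
      · intro i hi; simp [hyy.1]; omega
      · intro i hi; omega
      · intro i j hij hj; omega
    · have hyS : y ∈ verts S := (Finset.mem_insert.1 hyy.2).resolve_left hya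
      obtain ⟨k, p, h1, h2, h3, h4, h5⟩ := ih y hyS hya
      have hae : a ∉ e := fun hae => hya ((hye a).1 ⟨hae, by simp⟩).symm
      have hep : ∀ i ≤ k, ∀ z, z ∈ e → z ∈ p i → z = y := fun i hi z hz hz' =>
        (hye z).1 ⟨hz, Finset.mem_insert_of_mem (mem_verts.2 ⟨p i, h1 i hi, hz'⟩)⟩
      refine ⟨k + 1, fun i => Nat.casesOn i e p, ?_, ?_, ?_, ?_, ?_⟩
      · rintro (_ | i) hi
        · simp
        · exact Finset.mem_insert_of_mem (h1 i (by omega))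
      · rintro (_ | i) hi
        · simpa using hve
        · have : v ∉ p i := fun hvp => hvS (mem_verts.2 ⟨p i, h1 i (by omega), hvp⟩)
          simpa using this
      · rintro (_ | i) hi
        · simpa using hae
        · simpa using h3 i (by omega)
      · rintro (_ | i) hi
        · refine Finset.card_eq_one.2 ⟨y, ?_⟩
          ext z
          have hy0 := (h2 0 (by omega)).2 rfl
          change z ∈ e ∩ p 0 ↔ z ∈ {y}
          rw [Finset.mem_inter, Finset.mem_singleton]
          refine ⟨fun hz => hep 0 (by omega) z hz.1 hz.2, ?_⟩
          rintro rfl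
          exact ⟨hyy.1, hy0⟩
        · exact h4 i (by omega)
      · rintro (_ | i) (_ | j) hij hj
        · omega
        · refine Finset.eq_empty_of_forall_notMem fun z hz => ?_
          obtain ⟨hz1, hz2⟩ := Finset.mem_inter.1 hz
          have hzy := hep j (by omega) z hz1 hz2
          subst hzy
          have := (h2 j (by omega)).1 hz2
          omega
        · omega
        · exact h5 i j (by omega) (by omega)

/-- An edge `f` closing a path of at least two edges between `v` and the root `a` yields a linear
cycle. -/
lemma Rooted.hasLinearCycle {H S : Finset (Finset V)} {a v : V} {f : Finset V}
    (h3 : ∀ e ∈ H, e.card = 3) (h : Rooted H a S) (hv : v ∈ verts S) (hva : v ≠ a)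
    (hno : ∀ e ∈ S, v ∈ e → a ∉ e) (hf : f ∈ H) (hvf : v ∈ f) (haf : a ∈ f)
    (hfS : ∀ z ∈ f, z ∈ verts S → z = v ∨ z = a) : HasLinearCycle H := by
  obtain ⟨k, p, h1, h2, h4, h5, h6⟩ := h.exists_path v hv hva
  have hk : k ≠ 0 := by
    rintro rfl
    exact hno (p 0) (h1 0 le_rfl) ((h2 0 le_rfl).2 rfl) ((h4 0 le_rfl).2 rfl)
  have hfp : ∀ i ≤ k, ∀ z, z ∈ f ∧ z ∈ p i ↔ (z = v ∧ i = 0) ∨ (z = a ∧ i = k) := by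
    intro i hi z
    have e1 := h2 i hi
    have e2 := h4 i hi
    have e3 : z ∈ p i → z ∈ verts S := fun hz => mem_verts.2 ⟨p i, h1 i hi, hz⟩
    have e4 := hfS z
    grind
  -- Positions `0, …, k` carry the path and position `k + 1` carries `f`.
  let q : ℕ → Finset V := fun i => if i = k + 1 then f else p i
  have hqp : ∀ i ≤ k, q i = p i := fun i hi => if_neg (by omega)
  have hqf : q (k + 1) = f := if_pos rfl
  have hval : ∀ i : ZMod (k + 2), i.val ≤ k + 1 := fun i => Nat.le_of_lt_succ (ZMod.val_lt i)
  have hsucc : ∀ i : ZMod (k + 2), (i + 1).val = if i.val = k + 1 then 0 else i.val + 1 := by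
    intro i
    rw [ZMod.val_add, ZMod.val_one'' (by omega)]
    have := hval i
    split_ifs with hi
    · rw [hi]; simp
    · exact Nat.mod_eq_of_lt (by omega)
  have hinj : ∀ i j : ZMod (k + 2), i.val = j.val → i = j := fun i j hij =>
    ZMod.val_injective _ hij
  have hH : ∀ i : ZMod (k + 2), q i.val ∈ H := by
    intro i
    rcases (hval i).lt_or_eq with hi | hi
    · rw [hqp _ (by omega)]; exact h.subset (h1 _ (by omega))
    · rw [hi, hqf]; exact hf
  have hcons : ∀ i : ZMod (k + 2), (q i.val ∩ q (i + 1).val).card = 1 := by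
    intro i
    rw [hsucc]
    rcases (hval i).lt_or_eq with hi | hi
    · rw [if_neg (by omega), hqp _ (by omega)]
      rcases (Nat.le_of_lt_succ hi).lt_or_eq with hi' | hi'
      · rw [hqp _ (by omega)]; exact h5 _ hi'
      · rw [hi', hqf, Finset.card_eq_one]
        refine ⟨a, ?_⟩
        ext z
        rw [Finset.inter_comm, Finset.mem_inter, hfp k le_rfl, Finset.mem_singleton]
        grind
    · rw [if_pos hi, hi, hqf, hqp 0 (by omega), Finset.card_eq_one]
      refine ⟨v, ?_⟩
      ext z
      rw [Finset.mem_inter, hfp 0 (by omega), Finset.mem_singleton]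
      grind
  have hdisj' : ∀ i j : ZMod (k + 2), i.val < j.val → i + 1 ≠ j → j + 1 ≠ i →
      q i.val ∩ q j.val = ∅ := by
    intro i j hij n1 n2
    have n1' : (i + 1).val ≠ j.val := fun e => n1 (hinj _ _ e)
    have n2' : (j + 1).val ≠ i.val := fun e => n2 (hinj _ _ e)
    rw [hsucc] at n1' n2'
    have hi := hval i
    rcases (hval j).lt_or_eq with hj | hj
    · rw [if_neg (by omega)] at n1'
      rw [hqp _ (by omega), hqp _ (by omega)]
      exact h6 _ _ (by omega) (by omega)
    · rw [if_neg (by omega)] at n1'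
      rw [if_pos hj] at n2'
      rw [hj, hqf, hqp _ (by omega)]
      refine Finset.eq_empty_of_forall_notMem fun z hz => ?_
      rw [Finset.inter_comm, Finset.mem_inter, hfp _ (by omega)] at hz
      omega
  have hdisj : ∀ i j : ZMod (k + 2), i ≠ j → i + 1 ≠ j → j + 1 ≠ i →
      q i.val ∩ q j.val = ∅ := by
    intro i j n0 n1 n2
    rcases lt_trichotomy i.val j.val with hij | hij | hij
    · exact hdisj' i j hij n1 n2
    · exact absurd (hinj _ _ hij) n0
    · rw [Finset.inter_comm]; exact hdisj' j i hij n2 n1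
  refine ⟨k + 2, by omega, fun i => q i.val, ?_, hH, hcons, hdisj⟩
  -- Equal edges at distinct positions would meet in three vertices, not in one or none.
  intro i j hij
  by_contra hne
  have hij' : q i.val = q j.val := hij
  have hc := h3 _ (hH i)
  by_cases n1 : i + 1 = j
  · have := hcons i
    rw [n1, ← hij', Finset.inter_self] at this
    omega
  by_cases n2 : j + 1 = i
  · have := hcons j
    rw [n2, ← hij', Finset.inter_self] at this
    omega
  have := hdisj i j hne n1 n2
  rw [← hij', Finset.inter_self] at this
  rw [this] at hc
  simp at hc

/-! ### Swaps -/

/-- In the absence of linear cycles a swap turns a linear tree into a linear tree on the same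
vertices. -/
lemma IsSwap.linearTree {H T T' : Finset (Finset V)} (h3 : ∀ e ∈ H, e.card = 3)
    (hnc : ¬ HasLinearCycle H) (hT : IsLinearTree H T) (hs : IsSwap H T T') :
    IsLinearTree H T' ∧ verts T' = verts T := by
  obtain ⟨v, a, b, e₀, hv, -, -, hab, hva, hvb, hf, hno, he₀, ha, hb, -, rfl⟩ := hs
  have hve₀ : v ∉ e₀ := fun hv₀ => (hno e₀ he₀ hv₀).1 ha
  obtain ⟨F, hF, hE, hD⟩ := hT.decomp h3 e₀ he₀
  obtain ⟨c, hca, hcb, he₀c⟩ : ∃ c, c ≠ a ∧ c ≠ b ∧ ∀ z, z ∈ e₀ ↔ z = a ∨ z = b ∨ z = c := by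
    have hcard : ((e₀.erase a).erase b).card = 1 := by
      rw [Finset.card_erase_of_mem (by simp [hb, hab.symm]), Finset.card_erase_of_mem ha,
        h3 e₀ (hT.subset he₀)]
    obtain ⟨c, hc⟩ := Finset.card_eq_one.1 hcard
    have hc' : ∀ z, z ≠ b ∧ z ≠ a ∧ z ∈ e₀ ↔ z = c := by
      intro z
      rw [← Finset.mem_singleton, ← hc]
      simp
    refine ⟨c, ((hc' c).2 rfl).2.1, ((hc' c).2 rfl).1, fun z => ?_⟩
    have := hc' z
    grind
  have hc : c ∈ e₀ := (he₀c c).2 (Or.inr (Or.inr rfl))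
  have hE' : T.erase e₀ = F c ∪ F a ∪ F b := by
    rw [hE]
    ext g
    simp only [Finset.mem_biUnion, Finset.mem_union, he₀c]
    grind
  have hFT : ∀ x ∈ e₀, F x ⊆ T := fun x hx g hg =>
    Finset.mem_of_mem_erase (hE ▸ Finset.mem_biUnion.2 ⟨x, hx, hg⟩)
  have hVT : verts T = e₀ ∪ (verts (F c) ∪ verts (F a) ∪ verts (F b)) := by
    rw [← verts_union, ← verts_union, ← hE', ← verts_insert, Finset.insert_erase he₀]
  have hda : v ∉ verts (F a) := by
    intro hva'
    refine hnc ((hF a ha).hasLinearCycle h3 hva' hva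
      (fun e he hve => (hno e (hFT a ha he) hve).1) hf (by simp) (by simp) ?_)
    intro z hz hz'
    have := hD a ha b hb z (Finset.mem_insert_of_mem hz')
    grind
  have hdb : v ∉ verts (F b) := by
    intro hvb'
    refine hnc ((hF b hb).hasLinearCycle h3 hvb' hvb
      (fun e he hve => (hno e (hFT b hb he) hve).2) hf (by simp) (by simp) ?_)
    intro z hz hz'
    have := hD b hb a ha z (Finset.mem_insert_of_mem hz')
    grind
  have hvc : v ∈ verts (F c) := by
    rw [hVT] at hv
    grind
  obtain ⟨hFc, hcc⟩ : IsLinearTree H (F c) ∧ c ∈ verts (F c) := by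
    rcases (hF c hc).eq_empty_or with h0 | h0
    · rw [h0, verts_empty] at hvc
      simp at hvc
    · exact h0
  have hac : a ∉ verts (F c) := fun h =>
    hca (hD c hc a ha a (Finset.mem_insert_of_mem h) (by simp))
  have hbc : b ∉ verts (F c) := fun h =>
    hcb (hD c hc b hb b (Finset.mem_insert_of_mem h) (by simp))
  have hba : b ∉ verts (F a) := fun h =>
    hab (hD a ha b hb b (Finset.mem_insert_of_mem h) (by simp))
  have hab' : a ∉ verts (F b) := fun h =>
    hab (hD b hb a ha a (Finset.mem_insert_of_mem h) (by simp)).symm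
  have hdca : ∀ z ∈ verts (F c), z ∉ verts (F a) := fun z h h' =>
    hca (hD c hc a ha z (Finset.mem_insert_of_mem h) (Finset.mem_insert_of_mem h'))
  have hdcb : ∀ z ∈ verts (F c), z ∉ verts (F b) := fun z h h' =>
    hcb (hD c hc b hb z (Finset.mem_insert_of_mem h) (Finset.mem_insert_of_mem h'))
  have hdab : ∀ z ∈ verts (F a), z ∉ verts (F b) := fun z h h' =>
    hab (hD a ha b hb z (Finset.mem_insert_of_mem h) (Finset.mem_insert_of_mem h'))
  rw [hE']
  constructor
  · -- Grow from `c`: the branch at `c`, then `f` at `v`, then the branches at `a` and `b`.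
    have hR1 : Rooted H c (insert {v, a, b} (F c)) := by
      refine Rooted.extend _ _ (hF c hc) hf (Finset.card_eq_one.2 ⟨v, ?_⟩)
      ext z
      simp only [Finset.mem_inter, Finset.mem_insert, Finset.mem_singleton]
      grind
    have hR2 : Rooted H c (insert {v, a, b} (F c) ∪ F a) := by
      refine hR1.glue (by simp [verts_insert]) (hF a ha) ?_
      intro y hy hy'
      rw [verts_insert] at hy'
      grind
    have hR3 : Rooted H c (insert {v, a, b} (F c) ∪ F a ∪ F b) := by
      refine hR2.glue (by simp [verts_insert, verts_union]) (hF b hb) ?_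
      intro y hy hy'
      rw [verts_union, verts_insert] at hy'
      grind
    rw [Finset.insert_union, Finset.insert_union] at hR3
    rcases hR3.eq_empty_or with h0 | h0
    · simp at h0
    · exact h0.1
  · rw [verts_insert, hVT, verts_union, verts_union]
    ext z
    have := he₀c z
    simp only [Finset.mem_union, Finset.mem_insert, Finset.mem_singleton]
    grind

/-- If `H` has no linear cycle and `T'` is obtained from a skeleton (resp. near-skeleton
with exceptional vertex `w`) `T` by a sequence of swaps with edges of `H` induced on
`V(T)`, then `T'` is again a skeleton (resp. near-skeleton with exceptional vertex `w`)
with `V(T') = V(T)`. -/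
theorem swaps_preserve_skeleton (H T T' : Finset (Finset V))
    (h3 : ∀ e ∈ H, e.card = 3) (hnc : ¬ HasLinearCycle H)
    (hsw : Relation.ReflTransGen (IsSwap H) T T') :
    (IsSkeleton H T → IsSkeleton H T' ∧ verts T' = verts T) ∧
    (∀ w : V, IsNearSkeleton H T w → IsNearSkeleton H T' w ∧ verts T' = verts T) := by
  have hstep : IsLinearTree H T → IsLinearTree H T' ∧ verts T' = verts T := by
    intro hT
    induction hsw with
    | refl => exact ⟨hT, rfl⟩
    | tail _ hs ih =>
      obtain ⟨h1, h2⟩ := hs.linearTree h3 hnc ih.1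
      exact ⟨h1, h2.trans ih.2⟩
  constructor
  · rintro ⟨hT, hsk⟩
    obtain ⟨h1, h2⟩ := hstep hT
    exact ⟨⟨h1, by rwa [h2]⟩, h2⟩
  · rintro w ⟨hT, hw, hsk⟩
    obtain ⟨h1, h2⟩ := hstep hT
    exact ⟨⟨h1, by rwa [h2], by rwa [h2]⟩, h2⟩
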